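/- arXiv:2202.01958 — 3 statements merged into one kernel-verified Lean document; each statement's English description precedes it below -/
import Mathlib

section
/- PAC-Bayes-λ bound (Theorem 2 / Thiemann et al.): Let Z be a measurable space, D a probability measure on Z, H a measurable space of hypotheses, and ℓ : H × Z → [0,1] a measurable loss. Let Q₀ be a probability measure on H, n ≥ 1, δ ∈ (0,1]. Then with probability at least 1 − δ over an i.i.d. sample S = (z₁,…,zₙ) drawn from Dⁿ, simultaneously for every probability measure Q on H and every λ̄ ∈ (0,2): R_D(Q) ≤ R̂_S(Q)/(1 − λ̄/2) + (KL(Q ‖ Q₀) + log(2√n/δ)) / (n·λ̄·(1 − λ̄/2)), where R̂_S(Q) = E_{h∼Q}[(1/n) Σ_{i=1}^n ℓ(h, z_i)] and R_D(Q) = E_{h∼Q} E_{z∼D}[ℓ(h, z)]. -/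
open MeasureTheory ProbabilityTheory
open scoped Classical

/-- The Kullback–Leibler divergence between measures `Q` and `Q₀`, taken to be `+∞` when
`Q` is not absolutely continuous with respect to `Q₀` (or the log-density is not integrable). -/
noncomputable def klDiv {α : Type*} [MeasurableSpace α] (Q Q₀ : Measure α) : ENNReal :=
  if Q ≪ Q₀ ∧ Integrable (fun a => Real.log (Q.rnDeriv Q₀ a).toReal) Q
  then ENNReal.ofReal (∫ a, Real.log (Q.rnDeriv Q₀ a).toReal ∂Q)
  else ⊤


lemma pb_exp_neg_le {x : ℝ} (hx : 0 ≤ x) : Real.exp (-x) ≤ 1 - x + x ^ 2 / 2 := by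
  have h := Real.quadratic_le_exp_of_nonneg hx
  have h2 : Real.exp (-x) * Real.exp x = 1 := by rw [← Real.exp_add]; simp
  have h3 : 0 < 1 - x + x ^ 2 / 2 := by nlinarith [sq_nonneg (x - 1)]
  have h4 : 1 ≤ (1 - x + x ^ 2 / 2) * Real.exp x := by
    calc (1 : ℝ) ≤ (1 - x + x ^ 2 / 2) * (1 + x + x ^ 2 / 2) := by
          nlinarith [sq_nonneg (x ^ 2)]
      _ ≤ _ := by gcongr
  have h5 := Real.exp_pos x
  by_contra! hc
  nlinarith [mul_lt_mul_of_pos_right hc h5]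

lemma pb_int_lower (n : ℕ) (hn : 1 ≤ n) (p m : ℝ) (hp : p ∈ Set.Icc (0 : ℝ) 1)
    (hm : m ∈ Set.Icc (0 : ℝ) 1) :
    ENNReal.ofReal (Real.exp (n * (m ^ 2 * p / 2)) * (5 / (6 * Real.sqrt n))) ≤
      ∫⁻ l in Set.Icc (0 : ℝ) 1, ENNReal.ofReal (Real.exp (n * (l * (m * p) - l ^ 2 * p / 2))) := by
  have hn' : (1 : ℝ) ≤ n := by exact_mod_cast hn
  set r := Real.sqrt n with hr
  have hr1 : 1 ≤ r := by rw [hr]; exact Real.one_le_sqrt.mpr hn'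
  have hr2 : r ^ 2 = n := Real.sq_sqrt (by positivity)
  set s := r⁻¹ with hs
  have hs0 : 0 < s := by positivity
  have hs1 : s ≤ 1 := inv_le_one_of_one_le₀ hr1
  have hns : n * s ^ 2 = 1 := by rw [← hr2, hs]; field_simp
  obtain ⟨hp0, hp1⟩ := hp
  obtain ⟨hm0, hm1⟩ := hm
  set u := m * (1 - s) with hu
  have hu0 : 0 ≤ u := mul_nonneg hm0 (by linarith)
  have hu1 : u + s ≤ 1 := by nlinarith [mul_nonneg (sub_nonneg.2 hm1) (sub_nonneg.2 hs1)]
  set E := Real.exp (n * (m ^ 2 * p / 2)) with hE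
  have hE0 : 0 < E := Real.exp_pos _
  have hpt : ∀ l : ℝ, E * (1 - n * (l - m) ^ 2 / 2) ≤
      Real.exp (n * (l * (m * p) - l ^ 2 * p / 2)) := by
    intro l
    have : n * (l * (m * p) - l ^ 2 * p / 2) = n * (m ^ 2 * p / 2) + (-(n * p * (l - m) ^ 2 / 2)) := by
      ring
    rw [this, Real.exp_add]
    gcongr
    have h1 := Real.add_one_le_exp (-(n * p * (l - m) ^ 2 / 2))
    have h2 : n * p * (l - m) ^ 2 ≤ n * (l - m) ^ 2 := by
      have : (0 : ℝ) ≤ n * (l - m) ^ 2 := by positivity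
      nlinarith
    linarith
  have hint : ∫ l in u..(u + s), E * (1 - n * (l - m) ^ 2 / 2)
      = E * (s - n / 6 * ((u + s - m) ^ 3 - (u - m) ^ 3)) := by
    have := intervalIntegral.integral_eq_sub_of_hasDerivAt (a := u) (b := u + s)
      (f := fun l => E * (l - n / 6 * (l - m) ^ 3)) (f' := fun l => E * (1 - n * (l - m) ^ 2 / 2))
      (fun x _ => by
        have h := ((hasDerivAt_id x).sub ((((hasDerivAt_id x).sub_const m).pow 3).const_mul ((n : ℝ) / 6))).const_mul E
        convert! h using 1
        simp only [id_eq]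
        push_cast
        ring) (by apply Continuous.intervalIntegrable; fun_prop)
    rw [this]; ring
  calc ENNReal.ofReal (E * (5 / (6 * r)))
      ≤ ENNReal.ofReal (∫ l in u..(u + s), E * (1 - n * (l - m) ^ 2 / 2)) := by
        apply ENNReal.ofReal_le_ofReal
        rw [hint]
        gcongr
        have e1 : u + s - m = s * (1 - m) := by rw [hu]; ring
        have e2 : u - m = - (s * m) := by rw [hu]; ring
        rw [e1, e2]
        have e3 : (n : ℝ) / 6 * ((s * (1 - m)) ^ 3 - (-(s * m)) ^ 3)
          = (n * s ^ 2) * s / 6 * ((1 - m) ^ 3 + m ^ 3) := by ring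
        rw [e3, hns]
        have e4 : (1 - m) ^ 3 + m ^ 3 ≤ 1 := by nlinarith [mul_nonneg hm0 (sub_nonneg.2 hm1)]
        have e5 : 5 / (6 * r) = 5 / 6 * s := by rw [hs]; field_simp
        rw [e5]; nlinarith
    _ ≤ ENNReal.ofReal (∫ l in u..(u + s), Real.exp (n * (l * (m * p) - l ^ 2 * p / 2))) := by
        apply ENNReal.ofReal_le_ofReal
        apply intervalIntegral.integral_mono_on (by linarith)
        · apply Continuous.intervalIntegrable; fun_prop
        · apply Continuous.intervalIntegrable; fun_prop
        · intro l _; exact hpt l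
    _ = ∫⁻ l in Set.Ioc u (u + s), ENNReal.ofReal (Real.exp (n * (l * (m * p) - l ^ 2 * p / 2))) := by
        rw [intervalIntegral.integral_of_le (by linarith), ofReal_integral_eq_lintegral_ofReal]
        · apply Continuous.integrableOn_Ioc; fun_prop
        · exact Filter.Eventually.of_forall fun _ => (Real.exp_pos _).le
    _ ≤ _ := by
        apply lintegral_mono_set
        intro x hx
        exact ⟨by linarith [hx.1], by linarith [hx.2]⟩

lemma pb_ptwise (n : ℕ) (hn : 1 ≤ n) (p a x : ℝ) (hp : p ∈ Set.Icc (0 : ℝ) 1)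
    (ha : a ≤ p) (hx : 0 < x) :
    ENNReal.ofReal (Real.exp (n * (x * a - x ^ 2 * p / 2))) ≤
      1 + ENNReal.ofReal (2 * Real.sqrt n - 1) *
      ∫⁻ l in Set.Icc (0 : ℝ) 1, ENNReal.ofReal (Real.exp (n * (l * a - l ^ 2 * p / 2))) := by
  have hn' : (1 : ℝ) ≤ n := by exact_mod_cast hn
  rcases le_or_gt a 0 with h0 | h0
  · refine le_trans ?_ le_self_add
    rw [ENNReal.ofReal_le_one, Real.exp_le_one_iff]
    have : x * a - x ^ 2 * p / 2 ≤ 0 := by nlinarith [mul_nonneg (sq_nonneg x) hp.1]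
    nlinarith
  have hp0 : 0 < p := by linarith
  obtain ⟨m, hm⟩ : ∃ m, m = a / p := ⟨_, rfl⟩
  have ham : a = m * p := by rw [hm]; field_simp
  have hm0 : 0 ≤ m := by rw [hm]; positivity
  have hm1 : m ≤ 1 := by rw [hm]; exact (div_le_one hp0).2 ha
  have key := pb_int_lower n hn p m hp ⟨hm0, hm1⟩
  rw [ham]
  grw [← key]
  set r := Real.sqrt n with hr
  have hr1 : 1 ≤ r := by rw [hr]; exact Real.one_le_sqrt.mpr hn'
  have hr2 : r ^ 2 = n := Real.sq_sqrt (by positivity)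
  rw [← ENNReal.ofReal_mul (by linarith), ← ENNReal.ofReal_one, ← ENNReal.ofReal_add (by norm_num)
    (by have : 0 ≤ 2 * r - 1 := by linarith
        positivity)]
  apply ENNReal.ofReal_le_ofReal
  have h1 : Real.exp (n * (x * (m * p) - x ^ 2 * p / 2)) ≤ Real.exp (n * (m ^ 2 * p / 2)) := by
    apply Real.exp_le_exp.2
    gcongr
    nlinarith [mul_nonneg hp.1 (sq_nonneg (x - m))]
  refine h1.trans ?_
  have hE0 := Real.exp_pos (n * (m ^ 2 * p / 2))
  have e5 : (2 * r - 1) * (Real.exp (n * (m ^ 2 * p / 2)) * (5 / (6 * r)))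
      = Real.exp (n * (m ^ 2 * p / 2)) * (5 / 3 - 5 / 6 * r⁻¹) := by field_simp; ring
  rw [e5]
  rcases Nat.lt_or_ge 1 n with h2 | h2
  · have h2' : (2 : ℝ) ≤ n := by exact_mod_cast h2
    have : 5 / 4 ≤ r := by nlinarith
    have : r⁻¹ ≤ (5 / 4)⁻¹ := by gcongr
    nlinarith
  · have h3 : n = 1 := by omega
    subst h3
    have hr3 : r = 1 := by rw [hr]; simp
    rw [hr3]
    have : Real.exp ((1 : ℕ) * (m ^ 2 * p / 2)) ≤ Real.exp 1 := by
      apply Real.exp_le_exp.2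
      have : m ^ 2 * p ≤ 1 * 1 := by
        apply mul_le_mul _ hp.2 hp.1 (by norm_num)
        nlinarith
      push_cast; linarith
    have := Real.exp_one_lt_d9
    set y := Real.exp ((1 : ℕ) * (m ^ 2 * p / 2))
    rw [inv_one]
    linarith

lemma pb_mgf {Z : Type*} [MeasurableSpace Z] (D : Measure Z) [IsProbabilityMeasure D]
    (f : Z → ℝ) (hf : Measurable f) (hf01 : ∀ z, f z ∈ Set.Icc (0 : ℝ) 1)
    (n : ℕ) (hn : 1 ≤ n) (l : ℝ) (hl : 0 ≤ l) :
    ∫⁻ S, ENNReal.ofReal (Real.exp (n * (l * ((∫ z, f z ∂D) - (n : ℝ)⁻¹ * ∑ i, f (S i))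
      - l ^ 2 * (∫ z, f z ∂D) / 2))) ∂(Measure.pi fun _ : Fin n => D) ≤ 1 := by
  have hn' : (n : ℝ) ≠ 0 := by positivity
  set p := ∫ z, f z ∂D with hp
  have hfi : Integrable f D := Integrable.of_bound hf.aestronglyMeasurable 1
    (Filter.Eventually.of_forall fun z => by
      rw [Real.norm_eq_abs, abs_of_nonneg (hf01 z).1]; exact (hf01 z).2)
  have hei : Integrable (fun z => Real.exp (-(l * f z))) D := Integrable.of_bound
    (by fun_prop) 1
    (Filter.Eventually.of_forall fun z => by
      rw [Real.norm_eq_abs, abs_of_nonneg (Real.exp_pos _).le, Real.exp_le_one_iff]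
      nlinarith [mul_nonneg hl (hf01 z).1])
  have h1 : ∫ z, Real.exp (-(l * f z)) ∂D ≤ Real.exp (-(l * p) + l ^ 2 * p / 2) := by
    calc ∫ z, Real.exp (-(l * f z)) ∂D ≤ ∫ z, (1 + (-l + l ^ 2 / 2) * f z) ∂D := by
          apply integral_mono hei ((integrable_const _).add (hfi.const_mul _))
          intro z
          have := pb_exp_neg_le (mul_nonneg hl (hf01 z).1)
          have h2 : f z ^ 2 ≤ f z := by nlinarith [(hf01 z).1, (hf01 z).2]
          have := mul_le_mul_of_nonneg_left h2 (sq_nonneg l)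
          change _ ≤ 1 + (-l + l ^ 2 / 2) * f z
          nlinarith
      _ = 1 + (-l + l ^ 2 / 2) * p := by
          rw [integral_add (integrable_const _) (hfi.const_mul _), integral_const_mul]; simp [hp]
      _ ≤ _ := by
          have := Real.add_one_le_exp (-(l * p) + l ^ 2 * p / 2)
          linarith
  have h0 : 0 ≤ ∫ z, Real.exp (-(l * f z)) ∂D := integral_nonneg fun _ => (Real.exp_pos _).le
  have hrew : ∀ S : Fin n → Z, Real.exp (n * (l * (p - (n : ℝ)⁻¹ * ∑ i, f (S i)) - l ^ 2 * p / 2))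
      = Real.exp (n * (l * p - l ^ 2 * p / 2)) * ∏ i, Real.exp (-(l * f (S i))) := by
    intro S
    rw [← Real.exp_sum, ← Real.exp_add, Finset.sum_neg_distrib, ← Finset.mul_sum]
    congr 1
    field_simp
    ring
  simp_rw [hrew]
  rw [← ofReal_integral_eq_lintegral_ofReal]
  · rw [integral_const_mul, integral_fintype_prod_eq_pow (ι := Fin n)
      (fun z => Real.exp (-(l * f z)))]
    rw [ENNReal.ofReal_le_one, Fintype.card_fin]
    calc _ ≤ Real.exp (n * (l * p - l ^ 2 * p / 2)) * (Real.exp (-(l * p) + l ^ 2 * p / 2)) ^ n := by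
          gcongr
      _ = 1 := by
          rw [← Real.exp_nat_mul, ← Real.exp_add, Real.exp_eq_one_iff]; ring
  · exact (Integrable.fintype_prod (f := fun _ z => Real.exp (-(l * f z))) fun _ => hei).const_mul _
  · exact Filter.Eventually.of_forall fun _ => by positivity

lemma pb_dv {H : Type*} [MeasurableSpace H] (Q Q₀ : Measure H) [IsProbabilityMeasure Q]
    [IsProbabilityMeasure Q₀] (hac : Q ≪ Q₀) (hint : Integrable (llr Q Q₀) Q)
    (f : H → ℝ) (hf : Measurable f) (C : ℝ) (hC : ∀ h, |f h| ≤ C) :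
    ∫ h, f h ∂Q ≤ ∫ h, llr Q Q₀ h ∂Q + Real.log (∫ h, Real.exp (f h) ∂Q₀) := by
  have hfQ : Integrable f Q := Integrable.of_bound hf.aestronglyMeasurable C
    (Filter.Eventually.of_forall hC)
  have hfe : Integrable (fun x => Real.exp (f x)) Q₀ := Integrable.of_bound
    (by fun_prop) (Real.exp C)
    (Filter.Eventually.of_forall fun z => by
      rw [Real.norm_eq_abs, abs_of_nonneg (Real.exp_pos _).le]
      exact Real.exp_le_exp.2 (le_of_abs_le (hC z)))
  have := isProbabilityMeasure_tilted hfe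
  have h1 := integral_llr_tilted_right hac hfQ hfe hint
  have h2 := InformationTheory.integral_llr_add_sub_measure_univ_nonneg
    (hac.trans (absolutelyContinuous_tilted hfe)) (integrable_llr_tilted_right hac hfQ hint hfe)
  simp at h2
  linarith

/-- PAC-Bayes-λ bound (Thiemann et al.): with probability at least `1 − δ` over an i.i.d.
sample `S ∼ Dⁿ`, simultaneously for every posterior probability measure `Q` and every
`lam ∈ (0,2)`:
`R_D(Q) ≤ R̂_S(Q)/(1 − lam/2) + (KL(Q ‖ Q₀) + log(2√n/δ)) / (n·lam·(1 − lam/2))`. -/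
theorem pac_bayes_lambda_bound
    {Z H : Type*} [MeasurableSpace Z] [MeasurableSpace H]
    (D : Measure Z) [IsProbabilityMeasure D]
    (ℓ : H → Z → ℝ) (hℓmeas : Measurable (Function.uncurry ℓ))
    (hℓ01 : ∀ h z, ℓ h z ∈ Set.Icc (0 : ℝ) 1)
    (Q₀ : Measure H) [IsProbabilityMeasure Q₀]
    (n : ℕ) (hn : 1 ≤ n) (δ : ℝ) (hδ : δ ∈ Set.Ioc (0 : ℝ) 1) :
    (Measure.pi fun _ : Fin n => D)
      {S : Fin n → Z | ∀ Q : Measure H, IsProbabilityMeasure Q →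
        ∀ lam : ℝ, lam ∈ Set.Ioo (0 : ℝ) 2 →
          ENNReal.ofReal (∫ h, ∫ z, ℓ h z ∂D ∂Q)
            ≤ ENNReal.ofReal ((∫ h, (n : ℝ)⁻¹ * ∑ i, ℓ h (S i) ∂Q) / (1 - lam / 2))
              + (klDiv Q Q₀ + ENNReal.ofReal (Real.log (2 * Real.sqrt n / δ)))
                / ENNReal.ofReal (n * lam * (1 - lam / 2)) }
      ≥ ENNReal.ofReal (1 - δ) := by
  obtain ⟨hδ0, hδ1⟩ := hδ
  have hn' : (1 : ℝ) ≤ n := by exact_mod_cast hn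
  have hr1 : 1 ≤ Real.sqrt n := Real.one_le_sqrt.mpr hn'
  have hK : 0 < 2 * Real.sqrt n / δ := by positivity
  have hlm : ∀ h, Measurable (ℓ h) := fun h => hℓmeas.comp measurable_prodMk_left
  set p : H → ℝ := fun h => ∫ z, ℓ h z ∂D with hp
  have hpm : Measurable p := (hℓmeas.stronglyMeasurable.integral_prod_right).measurable
  have hli : ∀ h, Integrable (ℓ h) D := fun h =>
    Integrable.of_bound (hlm h).aestronglyMeasurable 1
    (Filter.Eventually.of_forall fun z => by
      rw [Real.norm_eq_abs, abs_of_nonneg (hℓ01 h z).1]; exact (hℓ01 h z).2)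
  have hp01 : ∀ h, p h ∈ Set.Icc (0 : ℝ) 1 := fun h =>
    ⟨integral_nonneg fun z => (hℓ01 h z).1, by
      have := integral_mono (hli h) (integrable_const (1 : ℝ)) (fun z => (hℓ01 h z).2)
      simpa using this⟩
  set q : (Fin n → Z) → H → ℝ := fun S h => (n : ℝ)⁻¹ * ∑ i, ℓ h (S i) with hq
  have hq2 : Measurable (fun x : (Fin n → Z) × H => q x.1 x.2) := by
    apply Measurable.const_mul
    apply Finset.measurable_sum
    intro i _
    exact hℓmeas.comp (measurable_snd.prodMk ((measurable_pi_apply i).comp measurable_fst))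
  have hqm : ∀ S, Measurable (q S) := fun S => hq2.comp measurable_prodMk_left
  have hq01 : ∀ S h, q S h ∈ Set.Icc (0 : ℝ) 1 := by
    intro S h
    have h0 : 0 ≤ ∑ i, ℓ h (S i) := Finset.sum_nonneg fun i _ => (hℓ01 h (S i)).1
    have h1 : ∑ i, ℓ h (S i) ≤ n := by
      have := Finset.sum_le_sum (s := Finset.univ) fun (i : Fin n) _ => (hℓ01 h (S i)).2
      simpa using this
    refine ⟨by positivity, ?_⟩
    change (n : ℝ)⁻¹ * _ ≤ 1
    rw [inv_mul_le_iff₀ (by linarith)]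
    linarith
  -- the mixture statistic
  set g : (Fin n → Z) → H → ℝ → ENNReal := fun S h l =>
    ENNReal.ofReal (Real.exp (n * (l * (p h - q S h) - l ^ 2 * p h / 2))) with hg
  have hgm : Measurable (fun x : ((Fin n → Z) × H) × ℝ => g x.1.1 x.1.2 x.2) := by
    have h1 : Measurable (fun x : ((Fin n → Z) × H) × ℝ => q x.1.1 x.1.2) := hq2.comp measurable_fst
    have h2 : Measurable (fun x : ((Fin n → Z) × H) × ℝ => p x.1.2) :=
      hpm.comp (measurable_snd.comp measurable_fst)
    simp only [hg]
    fun_prop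
  set G : (Fin n → Z) → H → ENNReal := fun S h =>
    1 + ENNReal.ofReal (2 * Real.sqrt n - 1) * ∫⁻ l in Set.Icc (0 : ℝ) 1, g S h l with hG
  have hGm : Measurable (fun x : (Fin n → Z) × H => G x.1 x.2) := by
    apply Measurable.const_add
    apply Measurable.const_mul
    exact Measurable.lintegral_prod_right' hgm
  set Φ : (Fin n → Z) → ENNReal := fun S => ∫⁻ h, G S h ∂Q₀ with hΦ
  have hΦm : Measurable Φ := Measurable.lintegral_prod_right' hGm
  set P := Measure.pi fun _ : Fin n => D with hP
  have hGE : ∀ h, ∫⁻ S, G S h ∂P ≤ ENNReal.ofReal (2 * Real.sqrt n) := by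
    intro h
    have hgm' : Measurable (Function.uncurry fun (S : Fin n → Z) (l : ℝ) => g S h l) :=
      hgm.comp (f := fun x : (Fin n → Z) × ℝ => ((x.1, h), x.2)) (by fun_prop)
    have hm1 : Measurable fun S => ∫⁻ l in Set.Icc (0 : ℝ) 1, g S h l :=
      Measurable.lintegral_prod_right' hgm'
    simp only [hG]
    rw [lintegral_add_left measurable_const, lintegral_const_mul _ hm1,
      lintegral_lintegral_swap hgm'.aemeasurable]
    have : ∫⁻ l in Set.Icc (0 : ℝ) 1, ∫⁻ S, g S h l ∂P ≤ 1 := by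
      calc _ ≤ ∫⁻ l in Set.Icc (0 : ℝ) 1, 1 := by
            apply setLIntegral_mono measurable_const
            intro l hl
            exact pb_mgf D (ℓ h) (hlm h) (hℓ01 h) n hn l hl.1
        _ = 1 := by simp
    grw [this]
    simp only [lintegral_const, measure_univ, mul_one]
    rw [← ENNReal.ofReal_one, ← ENNReal.ofReal_add (by norm_num) (by linarith)]
    apply ENNReal.ofReal_le_ofReal
    linarith
  have hΦE : ∫⁻ S, Φ S ∂P ≤ ENNReal.ofReal (2 * Real.sqrt n) := by
    simp only [hΦ]
    rw [lintegral_lintegral_swap hGm.aemeasurable]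
    calc _ ≤ ∫⁻ h, ENNReal.ofReal (2 * Real.sqrt n) ∂Q₀ := lintegral_mono hGE
      _ = _ := by simp
  have hbad : P {S | ENNReal.ofReal (2 * Real.sqrt n / δ) ≤ Φ S} ≤ ENNReal.ofReal δ := by
    refine (meas_ge_le_lintegral_div hΦm.aemeasurable (by simpa using hK)
      ENNReal.ofReal_ne_top).trans ?_
    grw [hΦE]
    rw [← ENNReal.ofReal_div_of_pos hK]
    apply ENNReal.ofReal_le_ofReal
    apply le_of_eq
    field_simp
  have hgood : ENNReal.ofReal (1 - δ) ≤ P {S | ENNReal.ofReal (2 * Real.sqrt n / δ) ≤ Φ S}ᶜ := by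
    rw [prob_compl_eq_one_sub (measurableSet_le measurable_const hΦm),
      ENNReal.ofReal_sub _ hδ0.le, ENNReal.ofReal_one]
    gcongr
  refine hgood.trans (measure_mono ?_)
  intro S hS
  have hS' : Φ S ≤ ENNReal.ofReal (2 * Real.sqrt n / δ) := by
    rw [Set.mem_compl_iff, Set.mem_setOf_eq, not_le] at hS
    exact hS.le
  intro Q hQ lam hlam
  obtain ⟨hl0, hl2⟩ := hlam
  have hl3 : 0 < 1 - lam / 2 := by linarith
  have hden : 0 < n * lam * (1 - lam / 2) := by positivity
  by_cases hkl : Q ≪ Q₀ ∧ Integrable (fun a => Real.log (Q.rnDeriv Q₀ a).toReal) Q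
  swap
  · simp only [klDiv, if_neg hkl]
    rw [top_add, ENNReal.top_div_of_ne_top ENNReal.ofReal_ne_top, add_top]
    exact le_top
  simp only [klDiv, if_pos hkl]
  obtain ⟨hac, hint⟩ := hkl
  have hint' : Integrable (llr Q Q₀) Q := hint
  have hgibbs : 0 ≤ ∫ a, llr Q Q₀ a ∂Q := by
    have := InformationTheory.integral_llr_add_sub_measure_univ_nonneg hac hint'
    simpa using this
  have hlog : 0 ≤ Real.log (2 * Real.sqrt n / δ) := by
    apply Real.log_nonneg
    rw [le_div_iff₀ hδ0]
    linarith
  set f : H → ℝ := fun h => n * (lam * (p h - q S h) - lam ^ 2 * p h / 2) with hf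
  have hfm : Measurable f := by
    have := hqm S
    simp only [hf]
    fun_prop
  have hfb : ∀ h, |f h| ≤ n * 4 := by
    intro h
    have h1 := hp01 h
    have h2 := hq01 S h
    rw [abs_mul, Nat.abs_cast]
    gcongr
    rw [abs_le]
    constructor
    · nlinarith [mul_nonneg hl0.le h1.1, mul_nonneg hl0.le h2.1, mul_nonneg hl0.le (sub_nonneg.2 h2.2), mul_nonneg hl0.le (mul_nonneg h1.1 hl3.le)]
    · nlinarith [mul_nonneg hl0.le h1.1, mul_nonneg hl0.le h2.1, mul_nonneg hl0.le (sub_nonneg.2 h1.2), mul_nonneg (sq_nonneg lam) h1.1]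
  have hdv := pb_dv Q Q₀ hac hint' f hfm _ hfb
  have hexp : ∫ h, Real.exp (f h) ∂Q₀ ≤ 2 * Real.sqrt n / δ := by
    rw [← ENNReal.ofReal_le_ofReal_iff hK.le]
    refine le_trans ?_ hS'
    rw [ofReal_integral_eq_lintegral_ofReal]
    · apply lintegral_mono
      intro h
      exact pb_ptwise n hn (p h) (p h - q S h) lam (hp01 h) (by linarith [(hq01 S h).1]) hl0
    · exact Integrable.of_bound (by fun_prop) (Real.exp (n * 4))
        (Filter.Eventually.of_forall fun z => by
          rw [Real.norm_eq_abs, abs_of_nonneg (Real.exp_pos _).le]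
          exact Real.exp_le_exp.2 (le_of_abs_le (hfb z)))
    · exact Filter.Eventually.of_forall fun _ => (Real.exp_pos _).le
  have hexp0 : 0 < ∫ h, Real.exp (f h) ∂Q₀ := integral_exp_pos
    (Integrable.of_bound (by fun_prop) (Real.exp (n * 4))
        (Filter.Eventually.of_forall fun z => by
          rw [Real.norm_eq_abs, abs_of_nonneg (Real.exp_pos _).le]
          exact Real.exp_le_exp.2 (le_of_abs_le (hfb z))))
  have hlog2 := Real.log_le_log hexp0 hexp
  have hpi : Integrable p Q := Integrable.of_bound hpm.aestronglyMeasurable 1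
    (Filter.Eventually.of_forall fun z => by
      rw [Real.norm_eq_abs, abs_of_nonneg (hp01 z).1]; exact (hp01 z).2)
  have hqi : Integrable (q S) Q := Integrable.of_bound (hqm S).aestronglyMeasurable 1
    (Filter.Eventually.of_forall fun z => by
      rw [Real.norm_eq_abs, abs_of_nonneg (hq01 S z).1]; exact (hq01 S z).2)
  have hfint : ∫ h, f h ∂Q = n * lam * (1 - lam / 2) * ∫ h, p h ∂Q - n * lam * ∫ h, q S h ∂Q := by
    rw [← integral_const_mul, ← integral_const_mul,
      ← integral_sub (hpi.const_mul _) (hqi.const_mul _)]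
    congr 1
    ext h
    simp only [hf]
    ring
  have hq0 : 0 ≤ ∫ h, q S h ∂Q := integral_nonneg fun h => (hq01 S h).1
  change ENNReal.ofReal (∫ h, p h ∂Q) ≤ ENNReal.ofReal ((∫ h, q S h ∂Q) / (1 - lam / 2))
    + (ENNReal.ofReal (∫ a, llr Q Q₀ a ∂Q) + ENNReal.ofReal (Real.log (2 * Real.sqrt n / δ)))
                / ENNReal.ofReal (n * lam * (1 - lam / 2))
  rw [← ENNReal.ofReal_add hgibbs hlog, ← ENNReal.ofReal_div_of_pos hden,
    ← ENNReal.ofReal_add (by positivity) (by positivity)]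
  apply ENNReal.ofReal_le_ofReal
  have e : (∫ h, q S h ∂Q) / (1 - lam / 2) = (n * lam * ∫ h, q S h ∂Q) / (n * lam * (1 - lam / 2)) := by
    field_simp
  rw [e, ← add_div, le_div_iff₀ hden]
  linarith
end

section
/- Refined Pinsker inequality for binary KL: for all real numbers p̂, p with 0 ≤ p̂ ≤ p < 1 and p > 0, one has kl(p̂ ‖ p) ≥ (p − p̂)² / (2p). -/
/-- The binary Kullback–Leibler divergence between Bernoulli parameters `q` and `q'`
(with the convention `0 * log 0 = 0`, which holds automatically since `Real.log 0 = 0`). -/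
noncomputable def binKl (q q' : ℝ) : ℝ :=
  q * Real.log (q / q') + (1 - q) * Real.log ((1 - q) / (1 - q'))

/-- Refined Pinsker inequality for the binary KL divergence:
for `0 ≤ phat ≤ p < 1` with `p > 0`, `kl(phat ‖ p) ≥ (p − phat)² / (2p)`. -/
theorem refined_pinsker_binKl (phat p : ℝ) (h0 : 0 ≤ phat) (hle : phat ≤ p)
    (hp1 : p < 1) (hp : 0 < p) :
    (p - phat) ^ 2 / (2 * p) ≤ binKl phat p := by
  have key : ∀ t : ℝ, 0 ≤ t → t ≤ 1 → (t ^ 2 - 1) / 2 ≤ t * Real.log t := by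
    intro t ht ht1
    rcases ht.eq_or_lt with h | h
    · subst h; norm_num
    · have h2 := Real.sinh_le_self_iff.2 (Real.log_nonpos ht ht1)
      rw [Real.sinh_log h] at h2
      have h3 := mul_le_mul_of_nonneg_left h2 ht
      have h4 : t * ((t - t⁻¹) / 2) = (t ^ 2 - 1) / 2 := by field_simp
      linarith
  have h1p : 0 < 1 - p := by linarith
  have hA := key (phat / p) (by positivity) ((div_le_one hp).2 hle)
  have hB := InformationTheory.klFun_nonneg (x := (1 - phat) / (1 - p))
    (div_nonneg (by linarith) h1p.le)
  rw [InformationTheory.klFun_apply] at hB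
  have hA' := mul_le_mul_of_nonneg_left hA hp.le
  have hB' := mul_nonneg h1p.le hB
  have e1 : p * (phat / p * Real.log (phat / p)) = phat * Real.log (phat / p) := by
    rw [← mul_assoc, mul_div_cancel₀ _ hp.ne']
  have e2 : (1 - p) * ((1 - phat) / (1 - p) * Real.log ((1 - phat) / (1 - p)) + 1
      - (1 - phat) / (1 - p))
      = (1 - phat) * Real.log ((1 - phat) / (1 - p)) + (1 - p) - (1 - phat) := by
    have := mul_div_cancel₀ (1 - phat) h1p.ne'
    linear_combination (Real.log ((1 - phat) / (1 - p)) - 1) * this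
  have e3 : p * (((phat / p) ^ 2 - 1) / 2) = (p - phat) ^ 2 / (2 * p) + phat - p := by
    field_simp
    ring
  unfold binKl
  linarith
end

section
/- Square-root form of the PAC-Bayes bound (algebraic step for Equation (4)): for all real numbers p̂, p, ε with 0 ≤ p̂ ≤ p < 1, p > 0, and ε ≥ 0, if kl(p̂ ‖ p) ≤ ε then p − p̂ ≤ √(2·p·ε). -/
/-- Square-root form of the PAC-Bayes bound: for `0 ≤ phat ≤ p < 1`, `p > 0`, `ε ≥ 0`,
if `kl(phat ‖ p) ≤ ε` then `p − phat ≤ √(2·p·ε)`. -/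
theorem sqrt_form_of_binKl_le (phat p ε : ℝ) (h0 : 0 ≤ phat) (hle : phat ≤ p)
    (hp1 : p < 1) (hp : 0 < p) (hε : 0 ≤ ε) (hkl : binKl phat p ≤ ε) :
    p - phat ≤ Real.sqrt (2 * p * ε) := by
  apply Real.le_sqrt_of_sq_le
  have hq1 : 0 < 1 - phat := by linarith
  have hp1' : 0 < 1 - p := by linarith
  have h1 : p - phat ≤ (1 - phat) * Real.log ((1 - phat) / (1 - p)) := by
    have h := Real.one_sub_inv_le_log_of_pos (div_pos hq1 hp1')
    have h2 := mul_le_mul_of_nonneg_left h hq1.le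
    have h3 : (1 - phat) * (1 - ((1 - phat) / (1 - p))⁻¹) = p - phat := by
      field_simp
      ring
    linarith
  have h2 : (phat ^ 2 - p ^ 2) / (2 * p) ≤ phat * Real.log (phat / p) := by
    rcases h0.eq_or_lt with h | h
    · rw [← h, zero_mul]
      apply div_nonpos_of_nonpos_of_nonneg
      · nlinarith
      · linarith
    · have hv : 0 < p / phat := div_pos hp h
      have hl : 0 ≤ Real.log (p / phat) := Real.log_nonneg ((one_le_div h).2 hle)
      have hs := Real.self_le_sinh_iff.2 hl
      rw [Real.sinh_log hv] at hs
      have he : Real.log (phat / p) = - Real.log (p / phat) := by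
        rw [← Real.log_inv, inv_div]
      rw [he]
      have h3 := mul_le_mul_of_nonneg_left hs h.le
      have h4 : phat * ((p / phat - (p / phat)⁻¹) / 2) = -((phat ^ 2 - p ^ 2) / (2 * p)) := by
        field_simp
        ring
      linarith
  unfold binKl at hkl
  have h5 : (p - phat) + (phat ^ 2 - p ^ 2) / (2 * p) ≤ ε := by linarith
  have h6 : (p - phat) + (phat ^ 2 - p ^ 2) / (2 * p) = (p - phat) ^ 2 / (2 * p) := by
    field_simp
    ring
  rw [h6, div_le_iff₀ (by linarith)] at h5
  linarith
end
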